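/- arXiv:1504.02625 — 2 statements merged into one kernel-verified Lean document; each statement's English description precedes it below -/
import Mathlib

section
/- Every λ ∈ D₀(T) is an eigenvalue of finite multiplicity of the partial integral operator T = T₁ + T₂: the eigenspace ker(T₁ + T₂ − λE) is nonzero and finite-dimensional. -/
open MeasureTheory Complex

noncomputable section

/-- The measure on `ℝ` given by restricting Lebesgue measure to `[a,b]`. -/
abbrev muI (a b : ℝ) : MeasureTheory.Measure ℝ :=
  MeasureTheory.volume.restrict (Set.Icc a b)


section helpers14

set_option linter.unusedSectionVars false

variable {μ ν : Measure ℝ} [IsFiniteMeasure μ] [IsFiniteMeasure ν]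

theorem aux_ae_swap {q : ℝ × ℝ → Prop} (hq : ∀ᵐ z ∂(μ.prod ν), q z) :
    ∀ᵐ y ∂ν, ∀ᵐ x ∂μ, q (x, y) := by
  have h1 : ∀ᵐ w ∂(ν.prod μ), q w.swap :=
    (Measure.measurePreserving_swap (μ := ν) (ν := μ)).quasiMeasurePreserving.ae hq
  exact Measure.ae_ae_of_ae_prod h1

theorem aux_ae_snd {q : ℝ → Prop} (hq : ∀ᵐ y ∂ν, q y) :
    ∀ᵐ z ∂(μ.prod ν), q z.2 :=
  (Measure.quasiMeasurePreserving_snd (μ := μ) (ν := ν)).ae hq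

theorem aux_ae_fst {q : ℝ → Prop} (hq : ∀ᵐ y ∂μ, q y) :
    ∀ᵐ z ∂(μ.prod ν), q z.1 :=
  (Measure.quasiMeasurePreserving_fst (μ := μ) (ν := ν)).ae hq

theorem aux_slice_x (f : Lp ℂ 2 (μ.prod ν)) :
    ∀ᵐ y ∂ν, MemLp (fun x => f (x, y)) 2 μ := by
  have hf := Lp.memLp f
  have hi := (memLp_two_iff_integrable_sq_norm hf.1).1 hf
  filter_upwards [hf.1.prodMk_right, hi.prod_left_ae] with y h1 h2
  exact (memLp_two_iff_integrable_sq_norm h1).2 h2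

theorem aux_slice_y (f : Lp ℂ 2 (μ.prod ν)) :
    ∀ᵐ x ∂μ, MemLp (fun y => f (x, y)) 2 ν := by
  have hf := Lp.memLp f
  have hi := (memLp_two_iff_integrable_sq_norm hf.1).1 hf
  filter_upwards [hf.1.prodMk_left, hi.prod_right_ae] with y h1 h2
  exact (memLp_two_iff_integrable_sq_norm h1).2 h2

theorem aux_star {φ : ℝ → ℂ} (h : MemLp φ 2 μ) : MemLp (fun s => star (φ s)) 2 μ := h.star

theorem aux_int {φ u : ℝ → ℂ} (h : MemLp φ 2 μ) (hu : MemLp u 2 μ) :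
    Integrable (fun s => star (φ s) * u s) μ := (aux_star h).integrable_mul hu

theorem aux_coe_sum {α ι : Type*} [MeasurableSpace α] {ρ : Measure α} (s : Finset ι)
    (f : ι → Lp ℂ 2 ρ) : ∀ᵐ z ∂ρ, (∑ i ∈ s, f i : Lp ℂ 2 ρ) z = ∑ i ∈ s, f i z := by
  classical
  induction s using Finset.induction_on with
  | empty =>
    filter_upwards [Lp.coeFn_zero ℂ 2 ρ] with z hz
    simpa using hz
  | insert i s hi ih =>
    rw [Finset.sum_insert hi]
    filter_upwards [ih, Lp.coeFn_add (f i) (∑ i ∈ s, f i)] with z h1 h2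
    rw [h2, Finset.sum_insert hi, Pi.add_apply, h1]

theorem aux_span {α ι : Type*} [Fintype ι] [MeasurableSpace α] {ρ : Measure α}
    (F : ι → α → ℂ) (hF : ∀ i, MemLp (F i) 2 ρ) (u : Lp ℂ 2 ρ) (c : ι → ℂ)
    (hu : ∀ᵐ z ∂ρ, u z = ∑ i, c i * F i z) :
    u ∈ Submodule.span ℂ (Set.range fun i => (hF i).toLp (F i)) := by
  have : u = ∑ i, c i • (hF i).toLp (F i) := by
    apply Lp.ext
    have h2 : ∀ᵐ z ∂ρ, ∀ i, (c i • (hF i).toLp (F i) : Lp ℂ 2 ρ) z = c i * F i z := by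
      rw [ae_all_iff]
      intro i
      filter_upwards [Lp.coeFn_smul (c i) ((hF i).toLp (F i)), (hF i).coeFn_toLp] with z h1 h2
      rw [h1, Pi.smul_apply, h2, smul_eq_mul]
    filter_upwards [hu, h2, aux_coe_sum Finset.univ fun i => c i • (hF i).toLp (F i)]
      with z h1 h2 h3
    rw [h1, h3]
    exact Finset.sum_congr rfl fun i _ => (h2 i).symm
  rw [this]
  exact Submodule.sum_mem _ fun i _ => Submodule.smul_mem _ _ (Submodule.subset_span ⟨i, rfl⟩)

/-- the coefficient of an expansion along an orthonormal system -/
theorem aux_coef {n : ℕ} {φ : Fin n → ℝ → ℂ} (hL : ∀ k, MemLp (φ k) 2 μ)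
    (hON : ∀ i j, ∫ x, star (φ i x) * φ j x ∂μ = if i = j then 1 else 0)
    (u : Lp ℂ 2 (μ.prod ν)) (g : Fin n → ℝ → ℂ)
    (hu : ∀ᵐ z ∂(μ.prod ν), u z = ∑ k, φ k z.1 * g k z.2) :
    ∀ᵐ y ∂ν, ∀ k, ∫ s, star (φ k s) * u (s, y) ∂μ = g k y := by
  filter_upwards [aux_ae_swap hu] with y hy k
  have h1 : ∫ s, star (φ k s) * u (s, y) ∂μ = ∫ s, ∑ j, (star (φ k s) * φ j s) * g j y ∂μ := by
    apply integral_congr_ae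
    filter_upwards [hy] with s hs
    rw [hs, Finset.mul_sum]
    exact Finset.sum_congr rfl fun j _ => by ring
  rw [h1, integral_finsetSum _ fun j _ => (aux_int (hL k) (hL j)).mul_const _]
  simp_rw [integral_mul_const, hON]
  simp

/-- the form of `T₁ f` in terms of the coefficients of `f` -/
theorem aux_T1 {n : ℕ} {φ : Fin n → ℝ → ℂ} (hL : ∀ k, MemLp (φ k) 2 μ) (h : Fin n → ℝ → ℝ)
    (T : Lp ℂ 2 (μ.prod ν) →L[ℂ] Lp ℂ 2 (μ.prod ν))
    (hT : ∀ f : Lp ℂ 2 (μ.prod ν), ∀ᵐ z ∂(μ.prod ν),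
        T f z = ∫ s, (∑ k, φ k z.1 * star (φ k s) * (h k z.2 : ℂ)) * f (s, z.2) ∂μ)
    (f : Lp ℂ 2 (μ.prod ν)) :
    ∀ᵐ z ∂(μ.prod ν), T f z = ∑ k, φ k z.1 *
      ((h k z.2 : ℂ) * ∫ s, star (φ k s) * f (s, z.2) ∂μ) := by
  filter_upwards [hT f, aux_ae_snd (μ := μ) (aux_slice_x f)] with z h1 h2
  rw [h1]
  have h3 : ∀ s, (∑ k, φ k z.1 * star (φ k s) * (h k z.2 : ℂ)) * f (s, z.2)
      = ∑ k, (φ k z.1 * (h k z.2 : ℂ)) * (star (φ k s) * f (s, z.2)) := by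
    intro s
    rw [Finset.sum_mul]
    exact Finset.sum_congr rfl fun j _ => by ring
  simp_rw [h3]
  rw [integral_finsetSum _ fun j _ => (aux_int (hL j) h2).const_mul _]
  simp_rw [integral_const_mul, mul_assoc]

theorem aux_T2 {m : ℕ} {ψ : Fin m → ℝ → ℂ} (hL : ∀ k, MemLp (ψ k) 2 ν) (p : Fin m → ℝ → ℝ)
    (T : Lp ℂ 2 (μ.prod ν) →L[ℂ] Lp ℂ 2 (μ.prod ν))
    (hT : ∀ f : Lp ℂ 2 (μ.prod ν), ∀ᵐ z ∂(μ.prod ν),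
        T f z = ∫ t, (∑ j, (p j z.1 : ℂ) * ψ j z.2 * star (ψ j t)) * f (z.1, t) ∂ν)
    (f : Lp ℂ 2 (μ.prod ν)) :
    ∀ᵐ z ∂(μ.prod ν), T f z = ∑ j, ψ j z.2 *
      ((p j z.1 : ℂ) * ∫ t, star (ψ j t) * f (z.1, t) ∂ν) := by
  filter_upwards [hT f, aux_ae_fst (ν := ν) (aux_slice_y f)] with z h1 h2
  rw [h1]
  have h3 : ∀ s, (∑ j, (p j z.1 : ℂ) * ψ j z.2 * star (ψ j s)) * f (z.1, s)
      = ∑ j, (ψ j z.2 * (p j z.1 : ℂ)) * (star (ψ j s) * f (z.1, s)) := by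
    intro s
    rw [Finset.sum_mul]
    exact Finset.sum_congr rfl fun j _ => by ring
  simp_rw [h3]
  rw [integral_finsetSum _ fun j _ => (aux_int (hL j) h2).const_mul _]
  simp_rw [integral_const_mul, mul_assoc]

theorem aux_tensor {f g : ℝ → ℂ} (hf : MemLp f 2 μ) (hg : MemLp g 2 ν) :
    MemLp (fun z : ℝ × ℝ => f z.1 * g z.2) 2 (μ.prod ν) := by
  have hm : AEStronglyMeasurable (fun z : ℝ × ℝ => f z.1 * g z.2) (μ.prod ν) :=
    hf.1.comp_fst.mul hg.1.comp_snd
  rw [memLp_two_iff_integrable_sq_norm hm]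
  have := ((memLp_two_iff_integrable_sq_norm hf.1).1 hf).mul_prod
    ((memLp_two_iff_integrable_sq_norm hg.1).1 hg)
  refine this.congr (ae_of_all _ fun z => ?_)
  simp [mul_pow]

theorem aux_bdd {h : ℝ → ℝ} (hm : Measurable h) (hb : ∃ C : ℝ, ∀ᵐ y ∂ν, |h y| ≤ C)
    {ψ : ℝ → ℂ} (hψ : MemLp ψ 2 ν) : MemLp (fun y => (h y : ℂ) * ψ y) 2 ν := by
  obtain ⟨C, hC⟩ := hb
  have : MemLp (fun y => (h y : ℂ)) ⊤ ν :=
    memLp_top_of_bound (Complex.measurable_ofReal.comp hm).aestronglyMeasurable C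
      (by filter_upwards [hC] with y hy; simpa using hy)
  exact hψ.mul' this

theorem aux_finrank {n m : ℕ} {φ : Fin n → ℝ → ℂ} (hφ : ∀ k, MemLp (φ k) 2 μ)
    {h : Fin n → ℝ → ℝ} (hhm : ∀ k, Measurable (h k))
    (hhb : ∀ k, ∃ C : ℝ, ∀ᵐ y ∂ν, |h k y| ≤ C)
    {ψ : Fin m → ℝ → ℂ} (hψ : ∀ k, MemLp (ψ k) 2 ν) {p : Fin m → ℝ → ℝ}
    (hpm : ∀ k, Measurable (p k)) (hpb : ∀ k, ∃ C : ℝ, ∀ᵐ y ∂μ, |p k y| ≤ C)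
    (T1 T2 : Lp ℂ 2 (μ.prod ν) →L[ℂ] Lp ℂ 2 (μ.prod ν))
    (hT1 : ∀ f : Lp ℂ 2 (μ.prod ν), ∀ᵐ z ∂(μ.prod ν),
        T1 f z = ∫ s, (∑ k, φ k z.1 * star (φ k s) * (h k z.2 : ℂ)) * f (s, z.2) ∂μ)
    (hT2 : ∀ f : Lp ℂ 2 (μ.prod ν), ∀ᵐ z ∂(μ.prod ν),
        T2 f z = ∫ t, (∑ j, (p j z.1 : ℂ) * ψ j z.2 * star (ψ j t)) * f (z.1, t) ∂ν) :
    ∃ V : Submodule ℂ (Lp ℂ 2 (μ.prod ν)), FiniteDimensional ℂ V ∧ ∀ f, T1 (T2 f) ∈ V := by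
  have hF : ∀ i : Fin n × Fin m, MemLp
      (fun z : ℝ × ℝ => φ i.1 z.1 * ((h i.1 z.2 : ℂ) * ψ i.2 z.2)) 2 (μ.prod ν) := fun i =>
    aux_tensor (hφ i.1) (aux_bdd (hhm _) (hhb _) (hψ _))
  refine ⟨_, FiniteDimensional.span_of_finite ℂ (Set.finite_range _), fun f =>
    aux_span _ hF _ (fun i => ∫ s, star (φ i.1 s) *
      ((p i.2 s : ℂ) * ∫ t, star (ψ i.2 t) * f (s, t) ∂ν) ∂μ) ?_⟩
  have key : ∀ᵐ y ∂ν, ∀ k, ∫ s, star (φ k s) * (T2 f) (s, y) ∂μ = ∑ j, (∫ s, star (φ k s) *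
      ((p j s : ℂ) * ∫ t, star (ψ j t) * f (s, t) ∂ν) ∂μ) * ψ j y := by
    filter_upwards [aux_ae_swap (aux_T2 hψ p T2 hT2 f)] with y hy k
    have hint : ∀ j, Integrable (fun s => star (φ k s) *
      ((p j s : ℂ) * ∫ t, star (ψ j t) * f (s, t) ∂ν)) μ := by
      intro j
      have h1 : Integrable (fun z : ℝ × ℝ =>
          (((p j z.1 : ℂ) * star (φ k z.1)) * star (ψ j z.2)) * f z) (μ.prod ν) :=
        (aux_tensor (aux_bdd (hpm j) (hpb j) (aux_star (hφ k))) (aux_star (hψ j))).integrable_mul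
          (Lp.memLp f)
      refine h1.integral_prod_left.congr (ae_of_all _ fun s => ?_)
      simp only [mul_assoc]
      rw [integral_const_mul, integral_const_mul]
      ring
    have h1 : ∫ s, star (φ k s) * (T2 f) (s, y) ∂μ = ∫ s, ∑ j, (star (φ k s) *
      ((p j s : ℂ) * ∫ t, star (ψ j t) * f (s, t) ∂ν)) * ψ j y ∂μ := by
      apply integral_congr_ae
      filter_upwards [hy] with s hs
      rw [hs, Finset.mul_sum]
      exact Finset.sum_congr rfl fun j _ => by ring
    rw [h1, integral_finsetSum _ fun j _ => (hint j).mul_const _]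
    simp_rw [integral_mul_const]
  filter_upwards [aux_T1 hφ h T1 hT1 (T2 f), aux_ae_snd (μ := μ) key] with z h1 h2
  rw [h1, Fintype.sum_prod_type]
  refine Finset.sum_congr rfl fun k _ => ?_
  rw [h2 k, Finset.mul_sum, Finset.mul_sum]
  exact Finset.sum_congr rfl fun j _ => by ring

theorem aux_S1 {n : ℕ} {φ : Fin n → ℝ → ℂ} (hφ : ∀ k, MemLp (φ k) 2 μ)
    (hON : ∀ i j, ∫ x, star (φ i x) * φ j x ∂μ = if i = j then 1 else 0)
    {h : Fin n → ℝ → ℝ} (T S : Lp ℂ 2 (μ.prod ν) →L[ℂ] Lp ℂ 2 (μ.prod ν))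
    (hT : ∀ f : Lp ℂ 2 (μ.prod ν), ∀ᵐ z ∂(μ.prod ν),
        T f z = ∫ s, (∑ k, φ k z.1 * star (φ k s) * (h k z.2 : ℂ)) * f (s, z.2) ∂μ)
    (τ : ℂ)
    (hinj : ∀ u : Lp ℂ 2 (μ.prod ν), u - τ • T u = 0 → u = 0)
    (hS : ∀ f : Lp ℂ 2 (μ.prod ν), ∀ᵐ z ∂(μ.prod ν),
      S f z = ∑ k, φ k z.1 * (((h k z.2 : ℂ) / (1 - τ * (h k z.2 : ℂ))) *
        ∫ s, star (φ k s) * f (s, z.2) ∂μ))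
    (f : Lp ℂ 2 (μ.prod ν)) : S f - τ • T (S f) = T f := by
  set c : Fin n → ℝ → ℂ := fun k y => ∫ s, star (φ k s) * f (s, y) ∂μ with hc
  set r : Fin n → ℝ → ℂ := fun k y => (h k y : ℂ) / (1 - τ * (h k y : ℂ)) with hr
  have hTS : ∀ᵐ z ∂(μ.prod ν), T (S f) z = ∑ k, φ k z.1 *
      ((h k z.2 : ℂ) * (r k z.2 * c k z.2)) := by
    filter_upwards [aux_T1 hφ h T hT (S f), aux_ae_snd (μ := μ)
      (aux_coef hφ hON (S f) (fun k y => r k y * c k y) (hS f))] with z h1 h2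
    rw [h1]
    exact Finset.sum_congr rfl fun k _ => by rw [h2 k]
  set u := (S f - τ • T (S f)) - T f with hu
  have hue : ∀ᵐ z ∂(μ.prod ν), u z = ∑ k, φ k z.1 *
      (r k z.2 * c k z.2 - τ * ((h k z.2 : ℂ) * (r k z.2 * c k z.2)) - h k z.2 * c k z.2) := by
    filter_upwards [hS f, hTS, aux_T1 hφ h T hT f, Lp.coeFn_sub (S f - τ • T (S f)) (T f),
      Lp.coeFn_sub (S f) (τ • T (S f)), Lp.coeFn_smul τ (T (S f))] with z h1 h2 h3 h4 h5 h6
    rw [hu, h4, Pi.sub_apply, h5, Pi.sub_apply, h6, Pi.smul_apply, h1, h2, h3, smul_eq_mul,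
      Finset.mul_sum, ← Finset.sum_sub_distrib, ← Finset.sum_sub_distrib]
    exact Finset.sum_congr rfl fun k _ => by simp only [hr, hc]; ring
  have hu0 : u - τ • T u = 0 := by
    apply Lp.ext
    filter_upwards [hue, aux_T1 hφ h T hT u, aux_ae_snd (μ := μ)
      (aux_coef hφ hON u (fun k y =>
        (r k y * c k y - τ * ((h k y : ℂ) * (r k y * c k y)) - h k y * c k y)) hue),
      Lp.coeFn_sub u (τ • T u), Lp.coeFn_smul τ (T u), Lp.coeFn_zero ℂ 2 (μ.prod ν)]
      with z h1 h2 h3 h4 h5 h6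
    rw [h4, Pi.sub_apply, h5, Pi.smul_apply, h2, h1, h6, Pi.zero_apply, smul_eq_mul,
      Finset.mul_sum, ← Finset.sum_sub_distrib]
    refine Finset.sum_eq_zero fun k _ => ?_
    rw [h3 k]
    by_cases h0 : 1 - τ * (h k z.2 : ℂ) = 0
    · linear_combination (φ k z.1 * (r k z.2 * c k z.2 -
        τ * ((h k z.2 : ℂ) * (r k z.2 * c k z.2)) - h k z.2 * c k z.2)) * h0
    · have h7 : r k z.2 * (1 - τ * (h k z.2 : ℂ)) = h k z.2 := div_mul_cancel₀ _ h0
      linear_combination (φ k z.1 * c k z.2 * (1 - τ * (h k z.2 : ℂ))) * h7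
  exact sub_eq_zero.1 (hinj u hu0)

end helpers14

theorem statement14
    (a b c d : ℝ) (hab : a < b) (hcd : c < d)
    (n : ℕ) (hn : 1 ≤ n)
    (φ : Fin n → ℝ → ℂ)
    (hφL2 : ∀ k, MemLp (φ k) 2 (muI a b))
    (hφON : ∀ i j, ∫ x, star (φ i x) * φ j x ∂(muI a b) = if i = j then 1 else 0)
    (h : Fin n → ℝ → ℝ)
    (hhmeas : ∀ k, Measurable (h k))
    (hhbdd : ∀ k, ∃ C : ℝ, ∀ᵐ y ∂(muI c d), |h k y| ≤ C)
    (m : ℕ) (hm : 1 ≤ m)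
    (ψ : Fin m → ℝ → ℂ)
    (hψL2 : ∀ j, MemLp (ψ j) 2 (muI c d))
    (hψON : ∀ i j, ∫ y, star (ψ i y) * ψ j y ∂(muI c d) = if i = j then 1 else 0)
    (p : Fin m → ℝ → ℝ)
    (hpmeas : ∀ j, Measurable (p j))
    (hpbdd : ∀ j, ∃ C : ℝ, ∀ᵐ x ∂(muI a b), |p j x| ≤ C)
    (T1 T2 : Lp ℂ 2 ((muI a b).prod (muI c d)) →L[ℂ] Lp ℂ 2 ((muI a b).prod (muI c d)))
    (hT1sa : IsSelfAdjoint T1) (hT2sa : IsSelfAdjoint T2)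
    (hT1 : ∀ f : Lp ℂ 2 ((muI a b).prod (muI c d)),
      ∀ᵐ z ∂((muI a b).prod (muI c d)),
        T1 f z = ∫ s, (∑ k, φ k z.1 * star (φ k s) * (h k z.2 : ℂ)) * f (s, z.2) ∂(muI a b))
    (hT2 : ∀ f : Lp ℂ 2 ((muI a b).prod (muI c d)),
      ∀ᵐ z ∂((muI a b).prod (muI c d)),
        T2 f z = ∫ t, (∑ j, (p j z.1 : ℂ) * ψ j z.2 * star (ψ j t)) * f (z.1, t) ∂(muI c d))
    -- the orthogonal projections `P k`
    (P : Fin n → (Lp ℂ 2 ((muI a b).prod (muI c d)) →L[ℂ] Lp ℂ 2 ((muI a b).prod (muI c d))))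
    (hP : ∀ k, ∀ f : Lp ℂ 2 ((muI a b).prod (muI c d)),
      ∀ᵐ z ∂((muI a b).prod (muI c d)),
        P k f z = φ k z.1 * ∫ s, star (φ k s) * f (s, z.2) ∂(muI a b))
    -- the operators S₁(τ)
    (S1 : ℂ → (Lp ℂ 2 ((muI a b).prod (muI c d)) →L[ℂ] Lp ℂ 2 ((muI a b).prod (muI c d))))
    (hS1 : ∀ τ : ℂ, τ ≠ 0 → τ⁻¹ ∈ resolventSet ℂ T1 → τ⁻¹ ∈ resolventSet ℂ T2 →
      ∀ f : Lp ℂ 2 ((muI a b).prod (muI c d)),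
        ∀ᵐ z ∂((muI a b).prod (muI c d)),
          S1 τ f z = ∑ k, ((h k z.2 : ℂ) / (1 - τ * (h k z.2 : ℂ))) * P k f z)
    -- the operators W₁(τ) = (E-τT₂)⁻¹ S₁(τ) T₂
    (W1 : ℂ → (Lp ℂ 2 ((muI a b).prod (muI c d)) →L[ℂ] Lp ℂ 2 ((muI a b).prod (muI c d))))
    (hW1 : ∀ τ : ℂ, τ ≠ 0 → τ⁻¹ ∈ resolventSet ℂ T1 → τ⁻¹ ∈ resolventSet ℂ T2 →
      (1 - τ • T2) * W1 τ = S1 τ * T2)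
    -- the sets D(T) and R(T)
    (DT : Set ℂ)
    (hDT : DT = {τ : ℂ | τ ≠ 0 ∧ τ⁻¹ ∈ resolventSet ℂ T1 ∧ τ⁻¹ ∈ resolventSet ℂ T2 ∧
      ∃ g : Lp ℂ 2 ((muI a b).prod (muI c d)), g ≠ 0 ∧ (τ ^ 2 • W1 τ) g = g})
    -- the set D₀(T)
    (D0 : Set ℂ) (hD0 : D0 = (fun τ : ℂ => τ⁻¹) '' DT) :
    ∀ lam ∈ D0,
      LinearMap.ker (T1 + T2 - lam • (1 : Lp ℂ 2 ((muI a b).prod (muI c d)) →L[ℂ]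
          Lp ℂ 2 ((muI a b).prod (muI c d)))).toLinearMap ≠ ⊥ ∧
      FiniteDimensional ℂ
        ↥(LinearMap.ker (T1 + T2 - lam • (1 : Lp ℂ 2 ((muI a b).prod (muI c d)) →L[ℂ]
          Lp ℂ 2 ((muI a b).prod (muI c d)))).toLinearMap) := by
  intro lam hlam
  rw [hD0] at hlam
  obtain ⟨τ, hτ, rfl⟩ := hlam
  rw [hDT] at hτ
  obtain ⟨hτ0, hr1, hr2, g, hg0, hg⟩ := hτ
  have hinv : ∀ T : Lp ℂ 2 ((muI a b).prod (muI c d)) →L[ℂ] Lp ℂ 2 ((muI a b).prod (muI c d)),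
      τ⁻¹ ∈ resolventSet ℂ T → IsUnit (1 - τ • T) := by
    intro T hT
    rw [spectrum.mem_resolventSet_iff, Algebra.algebraMap_eq_smul_one] at hT
    have h2 : (1 - τ • T) = (Units.mk0 τ hτ0) • (τ⁻¹ • 1 - T) := by
      rw [Units.smul_mk0, smul_sub, smul_smul, mul_inv_cancel₀ hτ0, one_smul]
    rw [h2]
    exact hT.smul _
  obtain ⟨A, hA⟩ := (hinv T1 hr1).exists_left_inv
  obtain ⟨B, hB⟩ := (hinv T2 hr2).exists_left_inv
  have hA' : ∀ u, A (u - τ • T1 u) = u := fun u => by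
    simpa using congrArg (fun L => L u) hA
  have hB' : ∀ u, B (u - τ • T2 u) = u := fun u => by
    simpa using congrArg (fun L => L u) hB
  have hS : ∀ f, S1 τ f - τ • T1 (S1 τ f) = T1 f := by
    refine aux_S1 hφL2 hφON (h := h) T1 (S1 τ) hT1 τ (fun u hu => ?_) (fun f => ?_)
    · rw [← hA' u, hu, map_zero]
    · have h1 : ∀ᵐ z ∂((muI a b).prod (muI c d)), ∀ k,
          P k f z = φ k z.1 * ∫ s, star (φ k s) * f (s, z.2) ∂(muI a b) := by
        rw [ae_all_iff]
        exact fun k => hP k f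
      filter_upwards [hS1 τ hτ0 hr1 hr2 f, h1] with z h2 h3
      rw [h2]
      exact Finset.sum_congr rfl fun k _ => by rw [h3 k]; ring
  have hW : ∀ f, W1 τ f - τ • T2 (W1 τ f) = S1 τ (T2 f) := fun f => by
    simpa using congrArg (fun L => L f) (hW1 τ hτ0 hr1 hr2)
  constructor
  · intro hbot
    apply hg0
    rw [← Submodule.mem_bot ℂ, ← hbot, LinearMap.mem_ker]
    have e1 : g - τ • T2 g = τ ^ 2 • S1 τ (T2 g) := by
      have e0 : τ ^ 2 • W1 τ g = g := hg
      have e00 : τ ^ 2 • T2 (W1 τ g) = T2 g := by rw [← map_smul T2, e0]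
      rw [← hW g, smul_sub, smul_comm (τ ^ 2) τ, e00, e0]
    have e2 : τ ^ 2 • T1 (T2 g) = g - τ • T2 g - τ • (T1 g - τ • T1 (T2 g)) := by
      have e10 : τ ^ 2 • T1 (S1 τ (T2 g)) = T1 g - τ • T1 (T2 g) := by
        rw [← map_smul T1, ← e1, map_sub, map_smul]
      have e11 : τ ^ 2 • T1 (T2 g) = τ ^ 2 • (S1 τ (T2 g) - τ • T1 (S1 τ (T2 g))) := by
        rw [hS]
      rw [e11, smul_sub, smul_comm (τ ^ 2) τ, ← e1, e10]
    have e3 : g - τ • (T1 g + T2 g) = 0 := by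
      have : g - τ • (T1 g + T2 g)
        = (g - τ • T2 g - τ • (T1 g - τ • T1 (T2 g))) - τ ^ 2 • T1 (T2 g) := by module
      rw [this, ← e2, sub_self]
    have e4 : T1 g + T2 g - τ⁻¹ • g = -(τ⁻¹ • (g - τ • (T1 g + T2 g))) := by
      rw [smul_sub, smul_smul, inv_mul_cancel₀ hτ0, one_smul, neg_sub]
    change T1 g + T2 g - τ⁻¹ • g = 0
    rw [e4, e3, smul_zero, neg_zero]
  · obtain ⟨V, hV, hVm⟩ := aux_finrank hφL2 hhmeas hhbdd hψL2 hpmeas hpbdd T1 T2 hT1 hT2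
    have hle : LinearMap.ker (T1 + T2 - τ⁻¹ • (1 : Lp ℂ 2 ((muI a b).prod (muI c d)) →L[ℂ]
          Lp ℂ 2 ((muI a b).prod (muI c d)))).toLinearMap ≤ V.map (B * A).toLinearMap := by
      intro g hg
      rw [LinearMap.mem_ker] at hg
      replace hg : T1 g + T2 g - τ⁻¹ • g = 0 := hg
      refine ⟨τ ^ 2 • T1 (T2 g), V.smul_mem _ (hVm g), ?_⟩
      have e : τ ^ 2 • T1 (T2 g) = (g - τ • T2 g) - τ • T1 (g - τ • T2 g) := by
        have e5 : g = τ • (T1 g + T2 g) := by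
          rw [sub_eq_zero.1 hg, smul_smul, mul_inv_cancel₀ hτ0, one_smul]
        have : (g - τ • T2 g) - τ • T1 (g - τ • T2 g)
          = (g - τ • (T1 g + T2 g)) + τ ^ 2 • T1 (T2 g) := by
          rw [map_sub, map_smul]; module
        rw [this, ← e5, sub_self, zero_add]
      change B (A (τ ^ 2 • T1 (T2 g))) = g
      rw [e, hA', hB']
    exact Submodule.finiteDimensional_of_le hle
end
end

section
/- The spectrum of the partial integral operator T = T₁ + T₂ with degenerate kernels satisfies σ(T₁ + T₂) = {0} ∪ (⋃_{i=1}^n Essran(h_i)) ∪ (⋃_{j=1}^m Essran(p_j)) ∪ D₀(T). -/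
open MeasureTheory Complex

noncomputable section

/-- The essential range of a function `φ` with respect to a measure `μ` on `ℝ`. -/
def Essran (μ : MeasureTheory.Measure ℝ) (φ : ℝ → ℝ) : Set ℝ :=
  {l : ℝ | ∀ ε > 0, 0 < μ {ξ : ℝ | l - ε < φ ξ ∧ φ ξ < l + ε}}

section abstractpart
set_option linter.unusedSectionVars false
set_option linter.unusedSimpArgs false
open ContinuousLinearMap
variable {X Y H : Type*} [NormedAddCommGroup X] [InnerProductSpace ℂ X] [CompleteSpace X]
  [NormedAddCommGroup Y] [InnerProductSpace ℂ Y] [CompleteSpace Y]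
  [NormedAddCommGroup H] [InnerProductSpace ℂ H] [CompleteSpace H]

lemma adj_t (t : X →L[ℂ] Y →L[ℂ] H)
    (ht : ∀ u v u' v', inner ℂ (t u v) (t u' v') = inner ℂ u u' * inner ℂ v v')
    (u u' : X) (v : Y) : adjoint (t u) (t u' v) = inner ℂ u u' • v := by
  refine ext_inner_left ℂ fun w => ?_
  rw [adjoint_inner_right, ht, inner_smul_right]

lemma adj_t_flip (t : X →L[ℂ] Y →L[ℂ] H)
    (ht : ∀ u v u' v', inner ℂ (t u v) (t u' v') = inner ℂ u u' * inner ℂ v v')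
    (u : X) (v v' : Y) : adjoint (t.flip v) (t u v') = inner ℂ v v' • u := by
  refine ext_inner_left ℂ fun w => ?_
  rw [adjoint_inner_right, flip_apply, ht, inner_smul_right, mul_comm]

/-- The operator `∑ J_k A_k J_k†`. -/
def opS {ι : Type*} [Fintype ι] (J : ι → Y →L[ℂ] H) (A : ι → Y →L[ℂ] Y) : H →L[ℂ] H :=
  ∑ k, J k ∘L A k ∘L adjoint (J k)

lemma opS_apply {ι : Type*} [Fintype ι] (J : ι → Y →L[ℂ] H) (A : ι → Y →L[ℂ] Y) (f : H) :
    opS J A f = ∑ k, J k (A k (adjoint (J k) f)) := by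
  simp [opS, sum_apply]

lemma opS_mul {ι : Type*} [Fintype ι] [DecidableEq ι] (J : ι → Y →L[ℂ] H)
    (hJ : ∀ i j v, adjoint (J i) (J j v) = if i = j then v else 0)
    (A B : ι → Y →L[ℂ] Y) : opS J A * opS J B = opS J (fun k => A k * B k) := by
  ext f
  change opS J A (opS J B f) = _
  simp only [opS_apply, map_sum, hJ]
  refine Finset.sum_congr rfl fun k _ => ?_
  simp [apply_ite, Finset.sum_ite_eq]

lemma opS_J {ι : Type*} [Fintype ι] [DecidableEq ι] (J : ι → Y →L[ℂ] H)
    (hJ : ∀ i j v, adjoint (J i) (J j v) = if i = j then v else 0)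
    (A : ι → Y →L[ℂ] Y) (i : ι) (v : Y) : opS J A (J i v) = J i (A i v) := by
  simp only [opS_apply, hJ]
  rw [Finset.sum_eq_single i] <;> simp +contextual

lemma opS_comb {ι : Type*} [Fintype ι] (J : ι → Y →L[ℂ] H) (A B C : ι → Y →L[ℂ] Y) (τ : ℂ)
    (h : ∀ k, B k - A k - τ • C k = 0) : opS J B - opS J A - τ • opS J C = 0 := by
  ext f
  simp only [sub_apply, smul_apply, opS_apply, Finset.smul_sum, ← Finset.sum_sub_distrib,
    zero_apply]
  refine Finset.sum_eq_zero fun k _ => ?_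
  have := congrArg (fun Z : Y →L[ℂ] Y => J k (Z (adjoint (J k) f))) (h k)
  simpa using this

lemma opS_res {ι : Type*} [Fintype ι] [DecidableEq ι] (J : ι → Y →L[ℂ] H)
    (hJ : ∀ i j v, adjoint (J i) (J j v) = if i = j then v else 0)
    (A G : ι → Y →L[ℂ] Y) (τ : ℂ)
    (h1 : ∀ k, G k - A k - τ • (A k * G k) = 0) (h2 : ∀ k, G k - A k - τ • (G k * A k) = 0) :
    (1 - τ • opS J A) * (1 + τ • opS J G) = 1 ∧ (1 + τ • opS J G) * (1 - τ • opS J A) = 1 := by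
  have e1 := opS_comb J A G _ τ h1
  have e2 := opS_comb J A G _ τ h2
  rw [← opS_mul J hJ] at e1 e2
  constructor
  · calc _ = 1 + τ • (opS J G - opS J A - τ • (opS J A * opS J G)) := by
          simp only [sub_mul, mul_add, one_mul, mul_one, smul_mul_assoc, mul_smul_comm]; module
      _ = 1 := by rw [e1]; simp
  · calc _ = 1 + τ • (opS J G - opS J A - τ • (opS J G * opS J A)) := by
          simp only [add_mul, mul_sub, one_mul, mul_one, smul_mul_assoc, mul_smul_comm]; module
      _ = 1 := by rw [e2]; simp

lemma weyl (T : H →L[ℂ] H) (l : ℂ)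
    (hw : ∀ ε > 0, ∃ f : H, f ≠ 0 ∧ ‖T f - l • f‖ ≤ ε * ‖f‖) : l ∈ spectrum ℂ T := by
  rw [spectrum.mem_iff]
  rintro ⟨u, hu⟩
  set R : H →L[ℂ] H := (↑u⁻¹ : H →L[ℂ] H)
  obtain ⟨f, hf, hle⟩ := hw (1 / (‖R‖ + 1)) (by positivity)
  have h1 : R (l • f - T f) = f := by
    have h2 : R * u.val = 1 := u.inv_mul
    have := congrArg (fun Z : H →L[ℂ] H => Z f) h2
    rw [hu] at this
    simpa [Algebra.algebraMap_eq_smul_one] using this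
  have h2 : ‖f‖ ≤ ‖R‖ * (1 / (‖R‖ + 1) * ‖f‖) := by
    calc ‖f‖ = ‖R (l • f - T f)‖ := by rw [h1]
      _ ≤ ‖R‖ * ‖l • f - T f‖ := R.le_opNorm _
      _ ≤ _ := by rw [norm_sub_rev]; gcongr
  have h3 : 0 < ‖f‖ := norm_pos_iff.2 hf
  have h4 : ‖R‖ * (1 / (‖R‖ + 1)) < 1 := by
    rw [mul_one_div, div_lt_one (by positivity)]; linarith
  nlinarith

lemma mem_res_iff (T : H →L[ℂ] H) (τ : ℂ) (hτ : τ ≠ 0) :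
    τ⁻¹ ∈ resolventSet ℂ T ↔ IsUnit (1 - τ • T) := by
  rw [spectrum.mem_resolventSet_iff]
  have : algebraMap ℂ (H →L[ℂ] H) τ⁻¹ - T = (Units.mk0 τ hτ)⁻¹ • (1 - τ • T) := by
    rw [Algebra.algebraMap_eq_smul_one, smul_sub, Units.smul_def, Units.smul_def, smul_smul]
    simp [hτ]
  rw [this, isUnit_smul_iff]

/-- Half of the argument, applied twice. -/
lemma half_weyl (t : X →L[ℂ] Y →L[ℂ] H)
    (ht : ∀ u v u' v', inner ℂ (t u v) (t u' v') = inner ℂ u u' * inner ℂ v v')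
    {n m : ℕ} (φ : Fin n → X) (hφ : ∀ i j, inner ℂ (φ i) (φ j) = if i = j then (1 : ℂ) else 0)
    (ψ : Fin m → Y) (A : Fin n → Y →L[ℂ] Y) (B : Fin m → X →L[ℂ] X) (i : Fin n) (l : ℂ)
    (hw : ∀ ε > 0, ∃ v : Y, v ≠ 0 ∧ (∀ j, inner ℂ (ψ j) v = 0) ∧ ‖A i v - l • v‖ ≤ ε * ‖v‖) :
    l ∈ spectrum ℂ (opS (fun k => t (φ k)) A) ∧
    l ∈ spectrum ℂ (opS (fun k => t (φ k)) A + opS (fun j => t.flip (ψ j)) B) := by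
  have hJ : ∀ i j v, adjoint (t (φ i)) (t (φ j) v) = if i = j then v else 0 := by
    intro i j v; rw [adj_t t ht, hφ]; split_ifs <;> simp
  have hn : ∀ v, ‖t (φ i) v‖ = ‖v‖ := by
    intro v
    have : inner ℂ (t (φ i) v) (t (φ i) v) = inner ℂ v v := by rw [ht, hφ]; simp
    rw [@norm_eq_sqrt_re_inner ℂ, this, ← @norm_eq_sqrt_re_inner ℂ]
  have key : ∀ ε > 0, ∃ f : H, f ≠ 0 ∧ ‖opS (fun k => t (φ k)) A f - l • f‖ ≤ ε * ‖f‖ ∧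
      opS (fun j => t.flip (ψ j)) B f = 0 := by
    intro ε hε
    obtain ⟨v, hv, hψ, hle⟩ := hw ε hε
    refine ⟨t (φ i) v, ?_, ?_, ?_⟩
    · rw [← norm_ne_zero_iff, hn]; exact norm_ne_zero_iff.2 hv
    · rw [opS_J (fun k => t (φ k)) hJ A i v, ← map_smul, ← map_sub, hn, hn]; exact hle
    · rw [opS_apply]
      refine Finset.sum_eq_zero fun j _ => ?_
      rw [adj_t_flip t ht, hψ]; simp
  constructor
  · refine weyl _ _ fun ε hε => ?_
    obtain ⟨f, h1, h2, -⟩ := key ε hε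
    exact ⟨f, h1, h2⟩
  · refine weyl _ _ fun ε hε => ?_
    obtain ⟨f, h1, h2, h3⟩ := key ε hε
    exact ⟨f, h1, by rwa [add_apply, h3, add_zero]⟩

lemma zero_mem (t : X →L[ℂ] Y →L[ℂ] H)
    (ht : ∀ u v u' v', inner ℂ (t u v) (t u' v') = inner ℂ u u' * inner ℂ v v')
    {n m : ℕ} (φ : Fin n → X) (ψ : Fin m → Y) (A : Fin n → Y →L[ℂ] Y) (B : Fin m → X →L[ℂ] X)
    (u : X) (hu : u ≠ 0) (v : Y) (hv : v ≠ 0)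
    (hφ : ∀ i, inner ℂ (φ i) u = 0) (hψ : ∀ i, inner ℂ (ψ i) v = 0) :
    0 ∈ spectrum ℂ (opS (fun k => t (φ k)) A + opS (fun j => t.flip (ψ j)) B) := by
  refine weyl _ _ fun ε hε => ⟨t u v, ?_, ?_⟩
  · intro h0
    have := ht u v u v
    rw [h0] at this
    simp [hu, hv] at this
  · rw [add_apply, opS_apply, opS_apply]
    simp only [adj_t t ht, adj_t_flip t ht, hφ, hψ]
    simp; positivity

lemma compact_mul (t : X →L[ℂ] Y →L[ℂ] H)
    (ht : ∀ u v u' v', inner ℂ (t u v) (t u' v') = inner ℂ u u' * inner ℂ v v')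
    {n m : ℕ} (φ : Fin n → X) (ψ : Fin m → Y) (A : Fin n → Y →L[ℂ] Y) (B : Fin m → X →L[ℂ] X) :
    IsCompactOperator (opS (fun k => t (φ k)) A * opS (fun j => t.flip (ψ j)) B) := by
  have h1 : opS (fun k => t (φ k)) A * opS (fun j => t.flip (ψ j)) B =
      ∑ k, ∑ j, (t (φ k) ∘L A k) ∘L
        ((toSpanSingleton ℂ (ψ j)) ∘L (innerSL ℂ (φ k))) ∘L (B j ∘L adjoint (t.flip (ψ j))) := by
    ext f
    change opS (fun k => t (φ k)) A (opS (fun j => t.flip (ψ j)) B f) = _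
    simp only [opS_apply, sum_apply, comp_apply, map_sum, flip_apply, adj_t t ht,
      toSpanSingleton_apply, innerSL_apply_apply]
    exact Finset.sum_comm
  rw [h1]
  suffices ∀ k j, (t (φ k) ∘L A k) ∘L
        ((toSpanSingleton ℂ (ψ j)) ∘L (innerSL ℂ (φ k))) ∘L (B j ∘L adjoint (t.flip (ψ j))) ∈
      compactOperator (RingHom.id ℂ) H H from
    Submodule.sum_mem _ fun k _ => Submodule.sum_mem _ fun j _ => this k j
  intro k j
  have hc : IsCompactOperator (innerSL ℂ (φ k)) :=
    isCompactOperator_of_locallyCompactSpace_dom _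
  exact ((hc.clm_comp (toSpanSingleton ℂ (ψ j))).comp_clm
    (B j ∘L adjoint (t.flip (ψ j)))).clm_comp (t (φ k) ∘L A k)

lemma final_alg (T1 T2 S W : H →L[ℂ] H) (τ : ℂ) (hτ : τ ≠ 0)
    (h1 : IsUnit (1 - τ • T1)) (h2 : IsUnit (1 - τ • T2))
    (hS : (1 - τ • T1) * (1 + τ • S) = 1) (hW : (1 - τ • T2) * W = S * T2)
    (hc : IsCompactOperator (S * T2)) :
    τ⁻¹ ∈ spectrum ℂ (T1 + T2) ↔ ∃ g, g ≠ 0 ∧ (τ ^ 2 • W) g = g := by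
  have hfac : 1 - τ • (T1 + T2) = ((1 - τ • T1) * (1 - τ • T2)) * (1 - τ ^ 2 • W) := by
    symm
    calc _ = (1 - τ • T1) * ((1 - τ • T2) - τ ^ 2 • ((1 - τ • T2) * W)) := by
          rw [mul_assoc, mul_sub (1 - τ • T2), mul_one, mul_smul_comm]
      _ = (1 - τ • T1) - τ • (((1 - τ • T1) * (1 + τ • S)) * T2) := by
          rw [hW]
          simp only [sub_mul, mul_sub, mul_add, add_mul, one_mul, mul_one, smul_mul_assoc,
            mul_smul_comm, mul_assoc]
          module
      _ = _ := by rw [hS, one_mul]; module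
  have hWc : IsCompactOperator (τ ^ 2 • W) := by
    obtain ⟨u, hu⟩ := h2
    have : W = (↑u⁻¹ : H →L[ℂ] H) * (S * T2) := by
      rw [← hW, ← hu, Units.inv_mul_cancel_left]
    rw [this]
    exact (IsCompactOperator.clm_comp hc (↑u⁻¹ : H →L[ℂ] H)).smul (τ ^ 2)
  have h3 : τ⁻¹ ∈ spectrum ℂ (T1 + T2) ↔ (1 : ℂ) ∈ spectrum ℂ (τ ^ 2 • W) := by
    rw [← not_iff_not]
    change τ⁻¹ ∉ (resolventSet ℂ (T1 + T2))ᶜ ↔ _ ∉ (resolventSet ℂ (τ ^ 2 • W))ᶜ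
    rw [Set.notMem_compl_iff, Set.notMem_compl_iff, mem_res_iff _ _ hτ, hfac,
      (h1.mul h2).mul_left_iff, spectrum.mem_resolventSet_iff, map_one]
  rw [h3, ← hWc.hasEigenvalue_iff_mem_spectrum one_ne_zero]
  constructor
  · intro he
    obtain ⟨g, hg⟩ := he.exists_hasEigenvector
    exact ⟨g, hg.2, by simpa using hg.apply_eq_smul⟩
  · rintro ⟨g, hg, he⟩
    exact Module.End.hasEigenvalue_of_hasEigenvector (x := g)
      ⟨Module.End.mem_eigenspace_iff.2 (by simpa using he), hg⟩
end abstractpart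
section concretepart
set_option linter.unusedSectionVars false
open ContinuousLinearMap

variable {μ ν : Measure ℝ} [IsFiniteMeasure μ] [IsFiniteMeasure ν]

lemma tens_memLp {u v : ℝ → ℂ} (hu : MemLp u 2 μ) (hv : MemLp v 2 ν) :
    MemLp (fun z : ℝ × ℝ => u z.1 * v z.2) 2 (μ.prod ν) := by
  have hm : AEStronglyMeasurable (fun z : ℝ × ℝ => u z.1 * v z.2) (μ.prod ν) :=
    hu.1.comp_fst.mul hv.1.comp_snd
  rw [memLp_two_iff_integrable_sq_norm hm]
  have h1 := (memLp_two_iff_integrable_sq_norm hu.1).1 hu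
  have h2 := (memLp_two_iff_integrable_sq_norm hv.1).1 hv
  simpa [mul_pow] using h1.mul_prod h2

/-- The tensor product of two `L²` functions. -/
def tens (u : Lp ℂ 2 μ) (v : Lp ℂ 2 ν) : Lp ℂ 2 (μ.prod ν) :=
  (tens_memLp (Lp.memLp u) (Lp.memLp v)).toLp

lemma ae_fst {p : ℝ → Prop} (h : ∀ᵐ x ∂μ, p x) : ∀ᵐ z ∂(μ.prod ν), p z.1 :=
  Measure.quasiMeasurePreserving_fst.ae h

lemma ae_snd {p : ℝ → Prop} (h : ∀ᵐ x ∂ν, p x) : ∀ᵐ z ∂(μ.prod ν), p z.2 :=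
  Measure.quasiMeasurePreserving_snd.ae h

lemma tens_coe (u : Lp ℂ 2 μ) (v : Lp ℂ 2 ν) :
    ∀ᵐ z ∂(μ.prod ν), tens u v z = u z.1 * v z.2 := MemLp.coeFn_toLp _

lemma tens_inner (u : Lp ℂ 2 μ) (v : Lp ℂ 2 ν) (u' : Lp ℂ 2 μ) (v' : Lp ℂ 2 ν) :
    inner ℂ (tens u v) (tens u' v') = inner ℂ u u' * inner ℂ v v' := by
  rw [L2.inner_def, L2.inner_def, L2.inner_def, ← integral_prod_mul]
  refine integral_congr_ae ?_
  filter_upwards [tens_coe u v, tens_coe u' v'] with z h1 h2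
  rw [h1, h2]
  simp only [RCLike.inner_apply, map_mul]
  ring

lemma tens_norm (u : Lp ℂ 2 μ) (v : Lp ℂ 2 ν) : ‖tens u v‖ ≤ 1 * ‖u‖ * ‖v‖ := by
  have h := tens_inner u v u v
  rw [inner_self_eq_norm_sq_to_K, inner_self_eq_norm_sq_to_K, inner_self_eq_norm_sq_to_K] at h
  have h' : ‖tens u v‖ ^ 2 = (‖u‖ * ‖v‖) ^ 2 := by
    rw [mul_pow]; exact_mod_cast h
  rw [one_mul]
  exact (pow_le_pow_iff_left₀ (norm_nonneg _) (by positivity) two_ne_zero).1 h'.le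

/-- The tensor product as a bounded bilinear map. -/
def tensL (μ ν : Measure ℝ) [IsFiniteMeasure μ] [IsFiniteMeasure ν] :
    Lp ℂ 2 μ →L[ℂ] Lp ℂ 2 ν →L[ℂ] Lp ℂ 2 (μ.prod ν) :=
  LinearMap.mkContinuous₂ (LinearMap.mk₂ ℂ tens
    (by
      intro u u' v
      refine Lp.ext ?_
      filter_upwards [tens_coe (u + u') v, tens_coe u v, tens_coe u' v,
        Lp.coeFn_add (tens u v) (tens u' v), ae_fst (Lp.coeFn_add u u')] with z h1 h2 h3 h4 h5
      rw [h1, h4, h5]; simp only [Pi.add_apply, h2, h3]; ring)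
    (by
      intro c u v
      refine Lp.ext ?_
      filter_upwards [tens_coe (c • u) v, tens_coe u v,
        Lp.coeFn_smul c (tens u v), ae_fst (Lp.coeFn_smul c u)] with z h1 h2 h4 h5
      rw [h1, h4, h5]; simp only [Pi.smul_apply, h2, smul_eq_mul]; ring)
    (by
      intro u v v'
      refine Lp.ext ?_
      filter_upwards [tens_coe u (v + v'), tens_coe u v, tens_coe u v',
        Lp.coeFn_add (tens u v) (tens u v'), ae_snd (Lp.coeFn_add v v')] with z h1 h2 h3 h4 h5
      rw [h1, h4, h5]; simp only [Pi.add_apply, h2, h3]; ring)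
    (by
      intro c u v
      refine Lp.ext ?_
      filter_upwards [tens_coe u (c • v), tens_coe u v,
        Lp.coeFn_smul c (tens u v), ae_snd (Lp.coeFn_smul c v)] with z h1 h2 h4 h5
      rw [h1, h4, h5]; simp only [Pi.smul_apply, h2, smul_eq_mul]; ring)) 1
    (fun u v => tens_norm u v)

lemma tensL_apply (u : Lp ℂ 2 μ) (v : Lp ℂ 2 ν) : tensL μ ν u v = tens u v := rfl

lemma tensL_inner (u : Lp ℂ 2 μ) (v : Lp ℂ 2 ν) (u' : Lp ℂ 2 μ) (v' : Lp ℂ 2 ν) :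
    inner ℂ (tensL μ ν u v) (tensL μ ν u' v') = inner ℂ u u' * inner ℂ v v' := tens_inner u v u' v'

lemma integrable_left {u : ℝ → ℂ} (hu : MemLp u 2 μ) (f : Lp ℂ 2 (μ.prod ν)) :
    Integrable (fun z : ℝ × ℝ => star (u z.1) * f z) (μ.prod ν) := by
  have h1 : MemLp (fun z : ℝ × ℝ => star (u z.1)) 2 (μ.prod ν) := (hu.comp_fst ν).star
  exact h1.integrable_mul (Lp.memLp f)

lemma integrable_right {v : ℝ → ℂ} (hv : MemLp v 2 ν) (f : Lp ℂ 2 (μ.prod ν)) :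
    Integrable (fun z : ℝ × ℝ => star (v z.2) * f z) (μ.prod ν) := by
  have h1 : MemLp (fun z : ℝ × ℝ => star (v z.2)) 2 (μ.prod ν) := (hv.comp_snd μ).star
  exact h1.integrable_mul (Lp.memLp f)

lemma adj_left (u : Lp ℂ 2 μ) (f : Lp ℂ 2 (μ.prod ν)) :
    ∀ᵐ y ∂ν, adjoint (tensL μ ν u) f y = ∫ s, star (u s) * f (s, y) ∂μ := by
  have hF := integrable_left (Lp.memLp u) f
  refine Integrable.ae_eq_of_forall_setIntegral_eq _ _
    ((Lp.memLp _).integrable one_le_two) hF.integral_prod_right ?_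
  intro s hs hfin
  rw [← L2.inner_indicatorConstLp_one (𝕜 := ℂ) hs hfin.ne, adjoint_inner_right, tensL_apply,
    L2.inner_def, ← integral_indicator hs]
  have e1 : ∫ z, inner ℂ (tens u (indicatorConstLp 2 hs hfin.ne (1 : ℂ)) z) (f z) ∂(μ.prod ν) =
      ∫ z, (Prod.snd ⁻¹' s).indicator (fun z : ℝ × ℝ => star (u z.1) * f z) z ∂(μ.prod ν) := by
    refine integral_congr_ae ?_
    filter_upwards [tens_coe u (indicatorConstLp 2 hs hfin.ne (1 : ℂ)),
      ae_snd (μ := μ) (indicatorConstLp_coeFn (p := 2) (hs := hs) (hμs := hfin.ne) (c := (1 : ℂ)))]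
      with z h1 h2
    rw [h1, h2]
    by_cases hz : z.2 ∈ s
    · simp [Set.indicator, hz, RCLike.inner_apply, mul_comm]
    · simp [Set.indicator, hz, RCLike.inner_apply]
  rw [e1, integral_prod_symm _ (hF.indicator (measurable_snd hs))]
  refine integral_congr_ae (Filter.Eventually.of_forall fun y => ?_)
  by_cases hy : y ∈ s
  · simp [Set.indicator, hy]
  · simp [Set.indicator, hy]

lemma adj_right (v : Lp ℂ 2 ν) (f : Lp ℂ 2 (μ.prod ν)) :
    ∀ᵐ x ∂μ, adjoint ((tensL μ ν).flip v) f x = ∫ t, star (v t) * f (x, t) ∂ν := by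
  have hF := integrable_right (Lp.memLp v) f
  refine Integrable.ae_eq_of_forall_setIntegral_eq _ _
    ((Lp.memLp _).integrable one_le_two) hF.integral_prod_left ?_
  intro s hs hfin
  rw [← L2.inner_indicatorConstLp_one (𝕜 := ℂ) hs hfin.ne, adjoint_inner_right, flip_apply,
    tensL_apply, L2.inner_def, ← integral_indicator hs]
  have e1 : ∫ z, inner ℂ (tens (indicatorConstLp 2 hs hfin.ne (1 : ℂ)) v z) (f z) ∂(μ.prod ν) =
      ∫ z, (Prod.fst ⁻¹' s).indicator (fun z : ℝ × ℝ => star (v z.2) * f z) z ∂(μ.prod ν) := by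
    refine integral_congr_ae ?_
    filter_upwards [tens_coe (indicatorConstLp 2 hs hfin.ne (1 : ℂ)) v,
      ae_fst (ν := ν) (indicatorConstLp_coeFn (p := 2) (hs := hs) (hμs := hfin.ne) (c := (1 : ℂ)))]
      with z h1 h2
    rw [h1, h2]
    by_cases hz : z.1 ∈ s
    · simp [Set.indicator, hz, RCLike.inner_apply, mul_comm]
    · simp [Set.indicator, hz, RCLike.inner_apply]
  rw [e1, integral_prod _ (hF.indicator (measurable_fst hs))]
  refine integral_congr_ae (Filter.Eventually.of_forall fun y => ?_)
  by_cases hy : y ∈ s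
  · simp [Set.indicator, hy]
  · simp [Set.indicator, hy]

/-- Multiplication by an essentially bounded function. -/
def mulOp {g : ℝ → ℂ} (hg : MemLp g ⊤ μ) : Lp ℂ 2 μ →L[ℂ] Lp ℂ 2 μ :=
  (ContinuousLinearMap.mul ℂ ℂ).holderL μ ⊤ 2 2 hg.toLp

lemma mulOp_coe {g : ℝ → ℂ} (hg : MemLp g ⊤ μ) (v : Lp ℂ 2 μ) :
    ∀ᵐ y ∂μ, mulOp hg v y = g y * v y := by
  have h1 := (ContinuousLinearMap.mul ℂ ℂ).coeFn_holder (r := 2) hg.toLp v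
  filter_upwards [h1, hg.coeFn_toLp] with y h2 h3
  rw [← h3]; exact h2

lemma mulOp_rel {g h : ℝ → ℂ} (hg : MemLp g ⊤ μ) (hh : MemLp h ⊤ μ) (τ : ℂ)
    (hr : ∀ᵐ y ∂μ, g y - h y - τ * (h y * g y) = 0) :
    mulOp hg - mulOp hh - τ • (mulOp hh * mulOp hg) = 0 ∧
    mulOp hg - mulOp hh - τ • (mulOp hg * mulOp hh) = 0 := by
  constructor
  · ext v
    change ((mulOp hg v - mulOp hh v - τ • (mulOp hh (mulOp hg v)) : Lp ℂ 2 μ) : ℝ → ℂ) =ᵐ[μ]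
      ((0 : Lp ℂ 2 μ) : ℝ → ℂ)
    filter_upwards [hr, mulOp_coe hg v, mulOp_coe hh v, mulOp_coe hh (mulOp hg v),
      Lp.coeFn_sub (mulOp hg v - mulOp hh v) (τ • (mulOp hh (mulOp hg v))),
      Lp.coeFn_sub (mulOp hg v) (mulOp hh v), Lp.coeFn_smul τ (mulOp hh (mulOp hg v)),
      Lp.coeFn_zero ℂ 2 μ] with y h0 h1 h2 h3 h4 h5 h6 h7
    rw [h4, h7, Pi.sub_apply, h5, h6, Pi.sub_apply, Pi.smul_apply, h3, h1, h2, smul_eq_mul,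
      Pi.zero_apply]
    linear_combination v y * h0
  · ext v
    change ((mulOp hg v - mulOp hh v - τ • (mulOp hg (mulOp hh v)) : Lp ℂ 2 μ) : ℝ → ℂ) =ᵐ[μ]
      ((0 : Lp ℂ 2 μ) : ℝ → ℂ)
    filter_upwards [hr, mulOp_coe hg v, mulOp_coe hh v, mulOp_coe hg (mulOp hh v),
      Lp.coeFn_sub (mulOp hg v - mulOp hh v) (τ • (mulOp hg (mulOp hh v))),
      Lp.coeFn_sub (mulOp hg v) (mulOp hh v), Lp.coeFn_smul τ (mulOp hg (mulOp hh v)),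
      Lp.coeFn_zero ℂ 2 μ] with y h0 h1 h2 h3 h4 h5 h6 h7
    rw [h4, h7, Pi.sub_apply, h5, h6, Pi.sub_apply, Pi.smul_apply, h3, h1, h2, smul_eq_mul,
      Pi.zero_apply]
    linear_combination v y * h0

lemma sum_coe {α ι : Type*} [MeasurableSpace α] {ρ : Measure α} (s : Finset ι)
    (F : ι → Lp ℂ 2 ρ) : ∀ᵐ z ∂ρ, (∑ k ∈ s, F k : Lp ℂ 2 ρ) z = ∑ k ∈ s, F k z := by
  classical
  induction s using Finset.induction_on with
  | empty => filter_upwards [Lp.coeFn_zero ℂ 2 ρ] with z hz; simpa using hz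
  | insert a s ha ih =>
    rw [Finset.sum_insert ha]
    filter_upwards [ih, Lp.coeFn_add (F a) (∑ k ∈ s, F k)] with z h1 h2
    rw [h2, Pi.add_apply, h1, Finset.sum_insert ha]

lemma opS_left_coe {n : ℕ} {φ : Fin n → ℝ → ℂ} (hφ : ∀ k, MemLp (φ k) 2 μ)
    {g : Fin n → ℝ → ℂ} (hg : ∀ k, MemLp (g k) ⊤ ν) (f : Lp ℂ 2 (μ.prod ν)) :
    ∀ᵐ z ∂(μ.prod ν), opS (fun k => tensL μ ν (hφ k).toLp) (fun k => mulOp (hg k)) f z =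
      ∑ k, g k z.2 * (φ k z.1 * ∫ s, star (φ k s) * f (s, z.2) ∂μ) := by
  rw [opS_apply]
  have hk : ∀ k, ∀ᵐ z ∂(μ.prod ν), (tensL μ ν (hφ k).toLp
      (mulOp (hg k) (adjoint (tensL μ ν (hφ k).toLp) f)) : Lp ℂ 2 (μ.prod ν)) z =
      g k z.2 * (φ k z.1 * ∫ s, star (φ k s) * f (s, z.2) ∂μ) := by
    intro k
    filter_upwards [tens_coe (hφ k).toLp (mulOp (hg k) (adjoint (tensL μ ν (hφ k).toLp) f)),
      ae_fst (hφ k).coeFn_toLp,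
      ae_snd (mulOp_coe (hg k) (adjoint (tensL μ ν (hφ k).toLp) f)),
      ae_snd (adj_left (hφ k).toLp f)] with z h1 h2 h3 h4
    rw [tensL_apply, h1, h2, h3, h4]
    have : ∫ s, star ((hφ k).toLp (φ k) s) * f (s, z.2) ∂μ = ∫ s, star (φ k s) * f (s, z.2) ∂μ := by
      refine integral_congr_ae ?_
      filter_upwards [(hφ k).coeFn_toLp] with s hs
      rw [hs]
    rw [this]; ring
  filter_upwards [sum_coe Finset.univ (fun k => tensL μ ν (hφ k).toLp
      (mulOp (hg k) (adjoint (tensL μ ν (hφ k).toLp) f))), ae_all_iff.2 hk] with z h1 h2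
  rw [h1]
  exact Finset.sum_congr rfl fun k _ => h2 k

lemma opS_right_coe {m : ℕ} {ψ : Fin m → ℝ → ℂ} (hψ : ∀ k, MemLp (ψ k) 2 ν)
    {g : Fin m → ℝ → ℂ} (hg : ∀ k, MemLp (g k) ⊤ μ) (f : Lp ℂ 2 (μ.prod ν)) :
    ∀ᵐ z ∂(μ.prod ν), opS (fun k => (tensL μ ν).flip (hψ k).toLp) (fun k => mulOp (hg k)) f z =
      ∑ k, g k z.1 * (ψ k z.2 * ∫ t, star (ψ k t) * f (z.1, t) ∂ν) := by
  rw [opS_apply]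
  have hk : ∀ k, ∀ᵐ z ∂(μ.prod ν), ((tensL μ ν).flip (hψ k).toLp
      (mulOp (hg k) (adjoint ((tensL μ ν).flip (hψ k).toLp) f)) : Lp ℂ 2 (μ.prod ν)) z =
      g k z.1 * (ψ k z.2 * ∫ t, star (ψ k t) * f (z.1, t) ∂ν) := by
    intro k
    filter_upwards [tens_coe (mulOp (hg k) (adjoint ((tensL μ ν).flip (hψ k).toLp) f)) (hψ k).toLp,
      ae_snd (hψ k).coeFn_toLp,
      ae_fst (mulOp_coe (hg k) (adjoint ((tensL μ ν).flip (hψ k).toLp) f)),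
      ae_fst (adj_right (hψ k).toLp f)] with z h1 h2 h3 h4
    rw [flip_apply, tensL_apply, h1, h2, h3, h4]
    have : ∫ s, star ((hψ k).toLp (ψ k) s) * f (z.1, s) ∂ν = ∫ s, star (ψ k s) * f (z.1, s) ∂ν := by
      refine integral_congr_ae ?_
      filter_upwards [(hψ k).coeFn_toLp] with s hs
      rw [hs]
    rw [this]; ring
  filter_upwards [sum_coe Finset.univ (fun k => (tensL μ ν).flip (hψ k).toLp
      (mulOp (hg k) (adjoint ((tensL μ ν).flip (hψ k).toLp) f))), ae_all_iff.2 hk] with z h1 h2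
  rw [h1]
  exact Finset.sum_congr rfl fun k _ => h2 k

lemma T1_eq {n : ℕ} {φ : Fin n → ℝ → ℂ} (hφ : ∀ k, MemLp (φ k) 2 μ)
    {g : Fin n → ℝ → ℂ} (hg : ∀ k, MemLp (g k) ⊤ ν)
    (T1 : Lp ℂ 2 (μ.prod ν) →L[ℂ] Lp ℂ 2 (μ.prod ν))
    (hT1 : ∀ f : Lp ℂ 2 (μ.prod ν), ∀ᵐ z ∂(μ.prod ν),
        T1 f z = ∫ s, (∑ k, φ k z.1 * star (φ k s) * g k z.2) * f (s, z.2) ∂μ) :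
    T1 = opS (fun k => tensL μ ν (hφ k).toLp) (fun k => mulOp (hg k)) := by
  refine ContinuousLinearMap.ext fun f => Lp.ext ?_
  have hsec : ∀ k, ∀ᵐ z ∂(μ.prod ν), Integrable (fun s => star (φ k s) * f (s, z.2)) μ :=
    fun k => ae_snd (integrable_left (hφ k) f).prod_left_ae
  filter_upwards [hT1 f, opS_left_coe hφ hg f, ae_all_iff.2 hsec] with z h1 h2 h3
  rw [h1, h2]
  have : ∀ s, (∑ k, φ k z.1 * star (φ k s) * g k z.2) * f (s, z.2) =
      ∑ k, (g k z.2 * φ k z.1) * (star (φ k s) * f (s, z.2)) := by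
    intro s; rw [Finset.sum_mul]; exact Finset.sum_congr rfl fun k _ => by ring
  simp_rw [this]
  rw [integral_finsetSum _ fun k _ => (h3 k).const_mul _]
  refine Finset.sum_congr rfl fun k _ => ?_
  rw [integral_const_mul]; ring

lemma T2_eq {m : ℕ} {ψ : Fin m → ℝ → ℂ} (hψ : ∀ k, MemLp (ψ k) 2 ν)
    {g : Fin m → ℝ → ℂ} (hg : ∀ k, MemLp (g k) ⊤ μ)
    (T2 : Lp ℂ 2 (μ.prod ν) →L[ℂ] Lp ℂ 2 (μ.prod ν))
    (hT2 : ∀ f : Lp ℂ 2 (μ.prod ν), ∀ᵐ z ∂(μ.prod ν),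
        T2 f z = ∫ t, (∑ k, g k z.1 * ψ k z.2 * star (ψ k t)) * f (z.1, t) ∂ν) :
    T2 = opS (fun k => (tensL μ ν).flip (hψ k).toLp) (fun k => mulOp (hg k)) := by
  refine ContinuousLinearMap.ext fun f => Lp.ext ?_
  have hsec : ∀ k, ∀ᵐ z ∂(μ.prod ν), Integrable (fun t => star (ψ k t) * f (z.1, t)) ν :=
    fun k => ae_fst (integrable_right (hψ k) f).prod_right_ae
  filter_upwards [hT2 f, opS_right_coe hψ hg f, ae_all_iff.2 hsec] with z h1 h2 h3
  rw [h1, h2]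
  have : ∀ t, (∑ k, g k z.1 * ψ k z.2 * star (ψ k t)) * f (z.1, t) =
      ∑ k, (g k z.1 * ψ k z.2) * (star (ψ k t) * f (z.1, t)) := by
    intro s; rw [Finset.sum_mul]; exact Finset.sum_congr rfl fun k _ => by ring
  simp_rw [this]
  rw [integral_finsetSum _ fun k _ => (h3 k).const_mul _]
  refine Finset.sum_congr rfl fun k _ => ?_
  rw [integral_const_mul]; ring

lemma inner_toLp {u v : ℝ → ℂ} (hu : MemLp u 2 μ) (hv : MemLp v 2 μ) :
    inner ℂ hu.toLp hv.toLp = ∫ x, star (u x) * v x ∂μ := by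
  rw [L2.inner_def]
  refine integral_congr_ae ?_
  filter_upwards [hu.coeFn_toLp, hv.coeFn_toLp] with x h1 h2
  rw [h1, h2, RCLike.inner_apply, mul_comm]; rfl

lemma gap {h : ℝ → ℝ} {l : ℂ} (hl : l ∉ (fun r : ℝ => (r : ℂ)) '' Essran μ h) :
    ∃ δ > 0, ∀ᵐ y ∂μ, δ ≤ ‖l - (h y : ℂ)‖ := by
  by_cases him : l.im = 0
  · have h1 : l.re ∉ Essran μ h := fun hm => hl ⟨l.re, hm, Complex.ext (by simp) (by simp [him])⟩
    simp only [Essran, Set.mem_ofPred_eq, not_forall, not_lt, nonpos_iff_eq_zero] at h1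
    obtain ⟨ε, hε, h0⟩ := h1
    refine ⟨ε, hε, ?_⟩
    have h2 : ∀ᵐ y ∂μ, ¬ (l.re - ε < h y ∧ h y < l.re + ε) := by
      rw [ae_iff]; simpa using h0
    filter_upwards [h2] with y hy
    refine le_trans ?_ (Complex.abs_re_le_norm _)
    simp only [Complex.sub_re, Complex.ofReal_re]
    by_contra hc
    rw [not_le, abs_lt] at hc
    exact hy ⟨by linarith, by linarith⟩
  · refine ⟨|l.im|, abs_pos.2 him, Filter.Eventually.of_forall fun y => ?_⟩
    simpa using Complex.abs_im_le_norm (l - (h y : ℂ))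

lemma memLp_h {h : ℝ → ℝ} (hm : Measurable h) (hb : ∃ C : ℝ, ∀ᵐ y ∂μ, |h y| ≤ C) :
    MemLp (fun y => (h y : ℂ)) ⊤ μ := by
  obtain ⟨C, hC⟩ := hb
  exact memLp_top_of_bound (Complex.measurable_ofReal.comp hm).aestronglyMeasurable C
    (by simpa using hC)

lemma memLp_g {h : ℝ → ℝ} (hm : Measurable h) (hb : ∃ C : ℝ, ∀ᵐ y ∂μ, |h y| ≤ C) {τ : ℂ}
    (hτ : τ ≠ 0) (hl : τ⁻¹ ∉ (fun r : ℝ => (r : ℂ)) '' Essran μ h) :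
    MemLp (fun y => (h y : ℂ) / (1 - τ * (h y : ℂ))) ⊤ μ ∧
    ∀ᵐ y ∂μ, (h y : ℂ) / (1 - τ * (h y : ℂ)) - (h y : ℂ) -
      τ * ((h y : ℂ) * ((h y : ℂ) / (1 - τ * (h y : ℂ)))) = 0 := by
  obtain ⟨C, hC⟩ := hb
  obtain ⟨δ, hδ, hg⟩ := gap hl
  have hτ' : 0 < ‖τ‖ := norm_pos_iff.2 hτ
  have hn : ∀ᵐ y ∂μ, ‖τ‖ * δ ≤ ‖1 - τ * (h y : ℂ)‖ := by
    filter_upwards [hg] with y hy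
    have : 1 - τ * (h y : ℂ) = τ * (τ⁻¹ - h y) := by field_simp
    rw [this, norm_mul]; gcongr
  have hmc : Measurable fun y => (h y : ℂ) := Complex.measurable_ofReal.comp hm
  constructor
  · refine memLp_top_of_bound (hmc.div (measurable_const.sub
      (measurable_const.mul hmc))).aestronglyMeasurable (C / (‖τ‖ * δ)) ?_
    filter_upwards [hn, hC] with y h1 h2
    rw [norm_div, Complex.norm_real, Real.norm_eq_abs]
    have : 0 ≤ C := (abs_nonneg _).trans h2
    gcongr
  · filter_upwards [hn] with y h1
    have : 1 - τ * (h y : ℂ) ≠ 0 := by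
      intro h0; rw [h0, norm_zero] at h1
      have : 0 < ‖τ‖ * δ := by positivity
      linarith
    have h2 := div_mul_cancel₀ (h y : ℂ) this
    linear_combination h2

lemma poly_memLp (c d : ℝ) {A : Set ℝ} (hA : MeasurableSet A) (q : Polynomial ℂ) :
    MemLp (A.indicator fun y : ℝ => q.eval (y : ℂ)) 2 (muI c d) := by
  refine MemLp.indicator hA ?_
  have hcont : Continuous fun y : ℝ => q.eval (y : ℂ) := q.continuous.comp Complex.continuous_ofReal
  obtain ⟨C, hC⟩ := (isCompact_Icc (a := c) (b := d)).exists_bound_of_continuousOn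
    hcont.continuousOn
  refine MemLp.of_bound hcont.aestronglyMeasurable C ?_
  exact (ae_restrict_iff' measurableSet_Icc).2 (Filter.Eventually.of_forall hC)

/-- Polynomials cut off to `A`, as a linear map into `L²`. -/
def polyL (c d : ℝ) {A : Set ℝ} (hA : MeasurableSet A) : Polynomial ℂ →ₗ[ℂ] Lp ℂ 2 (muI c d) where
  toFun q := (poly_memLp c d hA q).toLp
  map_add' q r := by
    rw [← MemLp.toLp_add]
    refine MemLp.toLp_congr _ _ (Filter.Eventually.of_forall fun y => ?_)
    by_cases hy : y ∈ A <;> simp [hy]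
  map_smul' a q := by
    rw [RingHom.id_apply, ← MemLp.toLp_const_smul]
    refine MemLp.toLp_congr _ _ (Filter.Eventually.of_forall fun y => ?_)
    by_cases hy : y ∈ A <;> simp [hy]

lemma exists_orth (c d : ℝ) {A : Set ℝ} (hA : MeasurableSet A) (hpos : 0 < muI c d A)
    {m : ℕ} (ψ : Fin m → Lp ℂ 2 (muI c d)) :
    ∃ v : Lp ℂ 2 (muI c d), v ≠ 0 ∧ (∀ j, inner ℂ (ψ j) v = 0) ∧
      ∀ᵐ y ∂(muI c d), y ∉ A → v y = 0 := by
  let L : Polynomial ℂ →ₗ[ℂ] (Fin m → ℂ) :=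
    LinearMap.pi fun j => (innerSL ℂ (ψ j)).toLinearMap ∘ₗ polyL c d hA
  have hL : ¬ Function.Injective L := fun hi => Polynomial.not_finite (R := ℂ)
    (Module.Finite.of_injective L hi)
  rw [← LinearMap.ker_eq_bot, Submodule.eq_bot_iff] at hL
  push Not at hL
  obtain ⟨q, hq, hq0⟩ := hL
  have hco : ∀ᵐ y ∂(muI c d), polyL c d hA q y = A.indicator (fun y : ℝ => q.eval (y : ℂ)) y :=
    MemLp.coeFn_toLp (poly_memLp c d hA q)
  refine ⟨polyL c d hA q, ?_, ?_, ?_⟩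
  · intro h0
    have h1 : ∀ᵐ y ∂(muI c d), A.indicator (fun y : ℝ => q.eval (y : ℂ)) y = 0 := by
      rw [h0] at hco
      filter_upwards [hco, Lp.coeFn_zero ℂ 2 (muI c d)] with y h1 h2
      rw [← h1, h2]; rfl
    have hfin : {y : ℝ | q.eval (y : ℂ) = 0}.Finite := by
      have := (q.rootSet_finite ℂ).preimage (f := fun y : ℝ => (y : ℂ))
        Complex.ofReal_injective.injOn
      refine this.subset fun y hy => ?_
      simp only [Set.mem_preimage, Polynomial.mem_rootSet]
      exact ⟨hq0, by simpa using hy⟩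
    have h2 : ∀ᵐ y ∂(muI c d), y ∉ {y : ℝ | q.eval (y : ℂ) = 0} :=
      measure_eq_zero_iff_ae_notMem.1 (hfin.measure_zero _)
    refine hpos.ne' (measure_eq_zero_iff_ae_notMem.2 ?_)
    filter_upwards [h1, h2] with y h3 h4 h5
    rw [Set.indicator_of_mem h5] at h3
    exact h4 h3
  · intro j
    exact congrFun (LinearMap.mem_ker.1 hq) j
  · filter_upwards [hco] with y h1 h2
    rw [h1, Set.indicator_of_notMem h2]

lemma weyl_mul (c d : ℝ) {h : ℝ → ℝ} (hm : Measurable h) (hh : MemLp (fun y => (h y : ℂ)) ⊤ (muI c d))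
    {r : ℝ} (hr : r ∈ Essran (muI c d) h) {m : ℕ} (ψ : Fin m → Lp ℂ 2 (muI c d)) :
    ∀ ε > 0, ∃ v : Lp ℂ 2 (muI c d), v ≠ 0 ∧ (∀ j, inner ℂ (ψ j) v = 0) ∧
      ‖mulOp hh v - (r : ℂ) • v‖ ≤ ε * ‖v‖ := by
  intro ε hε
  have hA : MeasurableSet {ξ : ℝ | r - ε < h ξ ∧ h ξ < r + ε} :=
    (measurableSet_lt measurable_const hm).inter (measurableSet_lt hm measurable_const)
  obtain ⟨v, hv, ho, hs⟩ := exists_orth c d hA (hr ε hε) ψ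
  refine ⟨v, hv, ho, Lp.norm_le_mul_norm_of_ae_le_mul ?_⟩
  filter_upwards [hs, mulOp_coe hh v, Lp.coeFn_sub (mulOp hh v) ((r : ℂ) • v),
    Lp.coeFn_smul (r : ℂ) v] with y h1 h2 h3 h4
  rw [h3, Pi.sub_apply, h4, h2, Pi.smul_apply, smul_eq_mul, ← sub_mul, norm_mul]
  by_cases hy : y ∈ {ξ : ℝ | r - ε < h ξ ∧ h ξ < r + ε}
  · gcongr
    rw [← Complex.ofReal_sub, Complex.norm_real, Real.norm_eq_abs, abs_le]
    exact ⟨by linarith [hy.1], by linarith [hy.2]⟩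
  · rw [h1 hy]; simp

end concretepart
theorem statement15
    (a b c d : ℝ) (hab : a < b) (hcd : c < d)
    (n : ℕ) (hn : 1 ≤ n)
    (φ : Fin n → ℝ → ℂ)
    (hφL2 : ∀ k, MemLp (φ k) 2 (muI a b))
    (hφON : ∀ i j, ∫ x, star (φ i x) * φ j x ∂(muI a b) = if i = j then 1 else 0)
    (h : Fin n → ℝ → ℝ)
    (hhmeas : ∀ k, Measurable (h k))
    (hhbdd : ∀ k, ∃ C : ℝ, ∀ᵐ y ∂(muI c d), |h k y| ≤ C)
    (m : ℕ) (hm : 1 ≤ m)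
    (ψ : Fin m → ℝ → ℂ)
    (hψL2 : ∀ j, MemLp (ψ j) 2 (muI c d))
    (hψON : ∀ i j, ∫ y, star (ψ i y) * ψ j y ∂(muI c d) = if i = j then 1 else 0)
    (p : Fin m → ℝ → ℝ)
    (hpmeas : ∀ j, Measurable (p j))
    (hpbdd : ∀ j, ∃ C : ℝ, ∀ᵐ x ∂(muI a b), |p j x| ≤ C)
    (T1 T2 : Lp ℂ 2 ((muI a b).prod (muI c d)) →L[ℂ] Lp ℂ 2 ((muI a b).prod (muI c d)))
    (hT1sa : IsSelfAdjoint T1) (hT2sa : IsSelfAdjoint T2)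
    (hT1 : ∀ f : Lp ℂ 2 ((muI a b).prod (muI c d)),
      ∀ᵐ z ∂((muI a b).prod (muI c d)),
        T1 f z = ∫ s, (∑ k, φ k z.1 * star (φ k s) * (h k z.2 : ℂ)) * f (s, z.2) ∂(muI a b))
    (hT2 : ∀ f : Lp ℂ 2 ((muI a b).prod (muI c d)),
      ∀ᵐ z ∂((muI a b).prod (muI c d)),
        T2 f z = ∫ t, (∑ j, (p j z.1 : ℂ) * ψ j z.2 * star (ψ j t)) * f (z.1, t) ∂(muI c d))
    -- the orthogonal projections `P k`
    (P : Fin n → (Lp ℂ 2 ((muI a b).prod (muI c d)) →L[ℂ] Lp ℂ 2 ((muI a b).prod (muI c d))))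
    (hP : ∀ k, ∀ f : Lp ℂ 2 ((muI a b).prod (muI c d)),
      ∀ᵐ z ∂((muI a b).prod (muI c d)),
        P k f z = φ k z.1 * ∫ s, star (φ k s) * f (s, z.2) ∂(muI a b))
    -- the operators S₁(τ)
    (S1 : ℂ → (Lp ℂ 2 ((muI a b).prod (muI c d)) →L[ℂ] Lp ℂ 2 ((muI a b).prod (muI c d))))
    (hS1 : ∀ τ : ℂ, τ ≠ 0 → τ⁻¹ ∈ resolventSet ℂ T1 → τ⁻¹ ∈ resolventSet ℂ T2 →
      ∀ f : Lp ℂ 2 ((muI a b).prod (muI c d)),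
        ∀ᵐ z ∂((muI a b).prod (muI c d)),
          S1 τ f z = ∑ k, ((h k z.2 : ℂ) / (1 - τ * (h k z.2 : ℂ))) * P k f z)
    -- the operators W₁(τ) = (E-τT₂)⁻¹ S₁(τ) T₂
    (W1 : ℂ → (Lp ℂ 2 ((muI a b).prod (muI c d)) →L[ℂ] Lp ℂ 2 ((muI a b).prod (muI c d))))
    (hW1 : ∀ τ : ℂ, τ ≠ 0 → τ⁻¹ ∈ resolventSet ℂ T1 → τ⁻¹ ∈ resolventSet ℂ T2 →
      (1 - τ • T2) * W1 τ = S1 τ * T2)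
    -- the sets D(T) and R(T)
    (DT : Set ℂ)
    (hDT : DT = {τ : ℂ | τ ≠ 0 ∧ τ⁻¹ ∈ resolventSet ℂ T1 ∧ τ⁻¹ ∈ resolventSet ℂ T2 ∧
      ∃ g : Lp ℂ 2 ((muI a b).prod (muI c d)), g ≠ 0 ∧ (τ ^ 2 • W1 τ) g = g})
    -- the set D₀(T)
    (D0 : Set ℂ) (hD0 : D0 = (fun τ : ℂ => τ⁻¹) '' DT) :
    spectrum ℂ (T1 + T2) =
      {0} ∪ (⋃ i : Fin n, (fun r : ℝ => (r : ℂ)) '' Essran (muI c d) (h i)) ∪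
        (⋃ j : Fin m, (fun r : ℝ => (r : ℂ)) '' Essran (muI a b) (p j)) ∪ D0 := by
  have hh : ∀ k, MemLp (fun y => (h k y : ℂ)) ⊤ (muI c d) := fun k => memLp_h (hhmeas k) (hhbdd k)
  have hp : ∀ k, MemLp (fun y => (p k y : ℂ)) ⊤ (muI a b) := fun k => memLp_h (hpmeas k) (hpbdd k)
  have hT1e := T1_eq hφL2 hh T1 hT1
  have hT2e := T2_eq hψL2 hp T2 hT2
  set t := tensL (muI a b) (muI c d) with ht_def
  have ht : ∀ u v u' v', inner ℂ (t u v) (t u' v') = inner ℂ u u' * inner ℂ v v' := tensL_inner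
  have ht' : ∀ u v u' v', inner ℂ (t.flip u v) (t.flip u' v') = inner ℂ u u' * inner ℂ v v' := by
    intro u v u' v'
    rw [ContinuousLinearMap.flip_apply, ContinuousLinearMap.flip_apply, ht, mul_comm]
  have hφo : ∀ i j, inner ℂ ((hφL2 i).toLp) ((hφL2 j).toLp) = if i = j then (1 : ℂ) else 0 := by
    intro i j; rw [inner_toLp, hφON]
  have hψo : ∀ i j, inner ℂ ((hψL2 i).toLp) ((hψL2 j).toLp) = if i = j then (1 : ℂ) else 0 := by
    intro i j; rw [inner_toLp, hψON]
  have hJ : ∀ i j v, ContinuousLinearMap.adjoint (t ((hφL2 i).toLp)) (t ((hφL2 j).toLp) v) =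
      if i = j then v else 0 := by
    intro i j v; rw [adj_t t ht, hφo]; split_ifs <;> simp
  have hK : ∀ i j v, ContinuousLinearMap.adjoint (t.flip ((hψL2 i).toLp))
      (t.flip ((hψL2 j).toLp) v) = if i = j then v else 0 := by
    intro i j v; rw [adj_t t.flip ht', hψo]; split_ifs <;> simp
  -- the essential ranges lie in the spectra
  have hE1 : ∀ i, ∀ r ∈ Essran (muI c d) (h i),
      (r : ℂ) ∈ spectrum ℂ T1 ∧ (r : ℂ) ∈ spectrum ℂ (T1 + T2) := by
    intro i r hr
    rw [hT1e, hT2e]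
    exact half_weyl t ht (fun k => (hφL2 k).toLp) hφo (fun j => (hψL2 j).toLp)
      (fun k => mulOp (hh k)) (fun k => mulOp (hp k)) i r (weyl_mul c d (hhmeas i) (hh i) hr _)
  have hE2 : ∀ i, ∀ r ∈ Essran (muI a b) (p i),
      (r : ℂ) ∈ spectrum ℂ T2 ∧ (r : ℂ) ∈ spectrum ℂ (T1 + T2) := by
    intro i r hr
    rw [hT1e, hT2e, add_comm]
    have := half_weyl t.flip ht' (fun k => (hψL2 k).toLp) hψo (fun j => (hφL2 j).toLp)
      (fun k => mulOp (hp k)) (fun k => mulOp (hh k)) i r (weyl_mul a b (hpmeas i) (hp i) hr _)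
    rwa [ContinuousLinearMap.flip_flip] at this
  -- zero lies in the spectrum
  have hzero : (0 : ℂ) ∈ spectrum ℂ (T1 + T2) := by
    have hpos : ∀ {x y : ℝ}, x < y → 0 < muI x y Set.univ := by
      intro x y hxy
      simp [hxy]
    obtain ⟨u, hu, hu0, -⟩ := exists_orth a b MeasurableSet.univ (hpos hab)
      (fun k => (hφL2 k).toLp)
    obtain ⟨v, hv, hv0, -⟩ := exists_orth c d MeasurableSet.univ (hpos hcd)
      (fun k => (hψL2 k).toLp)
    rw [hT1e, hT2e]
    exact zero_mem t ht _ _ _ _ u hu v hv hu0 hv0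
  -- the key equivalence
  have hkey : ∀ τ : ℂ, τ ≠ 0 → τ⁻¹ ∈ resolventSet ℂ T1 → τ⁻¹ ∈ resolventSet ℂ T2 →
      (τ⁻¹ ∈ spectrum ℂ (T1 + T2) ↔
        ∃ g : Lp ℂ 2 ((muI a b).prod (muI c d)), g ≠ 0 ∧ (τ ^ 2 • W1 τ) g = g) := by
    intro τ hτ h1 h2
    have hne : ∀ k, τ⁻¹ ∉ (fun r : ℝ => (r : ℂ)) '' Essran (muI c d) (h k) := by
      rintro k ⟨r, hr, hrt⟩
      have := (hE1 k r hr).1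
      rw [show (r : ℂ) = τ⁻¹ from hrt] at this
      exact this h1
    have hg := fun k => memLp_g (hhmeas k) (hhbdd k) hτ (hne k)
    have hS : S1 τ = opS (fun k => t ((hφL2 k).toLp)) (fun k => mulOp (hg k).1) := by
      refine ContinuousLinearMap.ext fun f => Lp.ext ?_
      filter_upwards [hS1 τ hτ h1 h2 f, opS_left_coe hφL2 (fun k => (hg k).1) f,
        ae_all_iff.2 fun k => hP k f] with z e1 e2 e3
      rw [e1, e2]
      exact Finset.sum_congr rfl fun k _ => by rw [e3 k]
    refine final_alg T1 T2 (S1 τ) (W1 τ) τ hτ ((mem_res_iff _ _ hτ).1 h1)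
      ((mem_res_iff _ _ hτ).1 h2) ?_ (hW1 τ hτ h1 h2) ?_
    · rw [hS, hT1e]
      exact (opS_res _ hJ _ _ τ (fun k => (mulOp_rel (hg k).1 (hh k) τ (hg k).2).1)
        (fun k => (mulOp_rel (hg k).1 (hh k) τ (hg k).2).2)).1
    · rw [hS, hT2e]
      exact compact_mul t ht _ _ _ _
  ext l
  constructor
  · intro hl
    by_contra hnot
    simp only [Set.mem_union, not_or, Set.mem_iUnion, not_exists] at hnot
    obtain ⟨⟨⟨hl0, hlh⟩, hlp⟩, hlD⟩ := hnot
    have hl0' : l ≠ 0 := fun h0 => hl0 (by simp [h0])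
    obtain ⟨τ, hτ, rfl⟩ : ∃ τ : ℂ, τ ≠ 0 ∧ τ⁻¹ = l := ⟨l⁻¹, inv_ne_zero hl0', inv_inv l⟩
    have hg := fun k => memLp_g (hhmeas k) (hhbdd k) hτ (hlh k)
    have hq := fun k => memLp_g (hpmeas k) (hpbdd k) hτ (hlp k)
    have h1 : τ⁻¹ ∈ resolventSet ℂ T1 := by
      rw [mem_res_iff _ _ hτ, hT1e]
      have := opS_res _ hJ _ _ τ (fun k => (mulOp_rel (hg k).1 (hh k) τ (hg k).2).1)
        (fun k => (mulOp_rel (hg k).1 (hh k) τ (hg k).2).2)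
      exact ⟨⟨_, _, this.1, this.2⟩, rfl⟩
    have h2 : τ⁻¹ ∈ resolventSet ℂ T2 := by
      rw [mem_res_iff _ _ hτ, hT2e]
      have := opS_res _ hK _ _ τ (fun k => (mulOp_rel (hq k).1 (hp k) τ (hq k).2).1)
        (fun k => (mulOp_rel (hq k).1 (hp k) τ (hq k).2).2)
      exact ⟨⟨_, _, this.1, this.2⟩, rfl⟩
    apply hlD
    rw [hD0, hDT]
    exact ⟨τ, ⟨hτ, h1, h2, (hkey τ hτ h1 h2).1 hl⟩, rfl⟩
  · rintro (((h0 | h1) | h2) | h3)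
    · rw [Set.mem_singleton_iff.1 h0]; exact hzero
    · obtain ⟨i, r, hr, rfl⟩ := Set.mem_iUnion.1 h1
      exact (hE1 i r hr).2
    · obtain ⟨i, r, hr, rfl⟩ := Set.mem_iUnion.1 h2
      exact (hE2 i r hr).2
    · rw [hD0, hDT] at h3
      obtain ⟨τ, ⟨hτ, h1, h2, h4⟩, rfl⟩ := h3
      exact (hkey τ hτ h1 h2).2 h4
end
end
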